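/- arXiv:1203.1754 — 2 statements merged into one kernel-verified Lean document; each statement's English description precedes it below -/
import Mathlib

section
/- Let G be a finite simple graph and let s be a non-isolated simplicial vertex of G, i.e., s has at least one neighbour and the neighbourhood of s is a clique. If G has an edge clique cover of size k, then G has an edge clique cover of size at most k one of whose members is the closed neighbourhood N[s] of s. -/
/-- An edge clique cover of `G`: a family of vertex sets, each a clique in `G`,
such that every edge of `G` has both endpoints in some member of the family. -/
def IsEdgeCliqueCover {V : Type} (G : SimpleGraph V) (𝒞 : Finset (Finset V)) : Prop :=
  (∀ C ∈ 𝒞, G.IsClique (C : Set V)) ∧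
    ∀ u v : V, G.Adj u v → ∃ C ∈ 𝒞, u ∈ C ∧ v ∈ C

/-!
A member of the cover containing an edge at `s` is a clique through `s`, hence lies inside `N[s]`.
As `N[s]` is itself a clique, replacing that member by `N[s]` neither uncovers an edge
nor enlarges the cover.
-/

section

variable {V : Type*} {G : SimpleGraph V} {s : V}

theorem isClique_insert_neighborSet_iff :
    G.IsClique (insert s (G.neighborSet s)) ↔ G.IsClique (G.neighborSet s) := by
  rw [SimpleGraph.isClique_insert_of_notMem G.notMem_neighborSet_self]
  exact and_iff_left fun _ h => h

theorem subset_insert_neighborSet_of_isClique {C : Set V} (hC : G.IsClique C) (hs : s ∈ C) :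
    C ⊆ insert s (G.neighborSet s) := fun _ hx =>
  or_iff_not_imp_left.mpr fun hxs => hC hs hx (Ne.symm hxs)

end

theorem IsEdgeCliqueCover.insert_erase {V : Type} [DecidableEq V] {G : SimpleGraph V}
    {𝒞 : Finset (Finset V)} {C D : Finset V} (h : IsEdgeCliqueCover G 𝒞)
    (hD : G.IsClique (D : Set V)) (hCD : C ⊆ D) :
    IsEdgeCliqueCover G (insert D (𝒞.erase C)) := by
  refine ⟨fun B hB => ?_, fun u v huv => ?_⟩
  · rcases Finset.mem_insert.mp hB with rfl | hB
    · exact hD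
    · exact h.1 B (Finset.mem_of_mem_erase hB)
  · obtain ⟨B, hB, hu, hv⟩ := h.2 u v huv
    by_cases hBC : B = C
    · subst hBC
      exact ⟨D, Finset.mem_insert_self _ _, hCD hu, hCD hv⟩
    · exact ⟨B, Finset.mem_insert_of_mem (Finset.mem_erase_of_ne_of_mem hBC hB), hu, hv⟩

theorem card_insert_erase_le_of_mem {α : Type*} [DecidableEq α] {S : Finset α} {a : α} (b : α)
    (ha : a ∈ S) : (insert b (S.erase a)).card ≤ S.card :=
  (Finset.card_insert_le b (S.erase a)).trans_eq (Finset.card_erase_add_one ha)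

theorem stmt11_general {V : Type} [DecidableEq V] (G : SimpleGraph V) (s : V)
    [Fintype (G.neighborSet s)] (hne : ∃ t, G.Adj s t)
    (hsimp : G.IsClique (G.neighborSet s)) (𝒞 : Finset (Finset V))
    (h : IsEdgeCliqueCover G 𝒞) :
    ∃ 𝒞' : Finset (Finset V), IsEdgeCliqueCover G 𝒞' ∧ 𝒞'.card ≤ 𝒞.card ∧
      insert s (G.neighborFinset s) ∈ 𝒞' := by
  obtain ⟨t, hst⟩ := hne
  obtain ⟨C, hC, hsC, -⟩ := h.2 s t hst
  have hN : ((insert s (G.neighborFinset s) : Finset V) : Set V) = insert s (G.neighborSet s) := by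
    rw [Finset.coe_insert, SimpleGraph.coe_neighborFinset]
  have hN_clique : G.IsClique ((insert s (G.neighborFinset s) : Finset V) : Set V) :=
    hN ▸ isClique_insert_neighborSet_iff.mpr hsimp
  have hCN : C ⊆ insert s (G.neighborFinset s) :=
    Finset.coe_subset.mp (hN ▸ subset_insert_neighborSet_of_isClique (h.1 C hC) hsC)
  exact ⟨_, h.insert_erase hN_clique hCN, card_insert_erase_le_of_mem _ hC,
    Finset.mem_insert_self _ _⟩

theorem stmt11 {V : Type} [Fintype V] [DecidableEq V]
    (G : SimpleGraph V) [DecidableRel G.Adj] (s : V)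
    (hne : ∃ t, G.Adj s t)
    (hsimp : G.IsClique (G.neighborSet s))
    (k : ℕ) (𝒞 : Finset (Finset V))
    (h : IsEdgeCliqueCover G 𝒞) (hk : 𝒞.card = k) :
    ∃ 𝒞' : Finset (Finset V), IsEdgeCliqueCover G 𝒞' ∧ 𝒞'.card ≤ k ∧
      insert s (G.neighborFinset s) ∈ 𝒞' := by
  exact hk ▸ stmt11_general G s hne hsimp 𝒞 h
end

section
/- Let Φ be a CNF formula over variables indexed by Fin n (a finite set of clauses, each clause a finite set of literals, each literal a variable or its negation), and let Φ' = Φ ∧ Φ̄, where Φ̄ is the formula over n fresh duplicate variables obtained from Φ by replacing every variable with its duplicate and negating every literal (so Φ' is a CNF formula over 2n variables). Then: (a) Φ' is satisfiable if and only if Φ is satisfiable; and (b) if φ is a satisfying assignment of Φ, then the assignment of the 2n variables of Φ' that agrees with φ on the original variables and assigns to each duplicate variable the negation of the value of its original satisfies Φ' and assigns the value true to exactly n of the 2n variables. -/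
/-- A CNF formula over variables `V` is a finite set of clauses, each clause a
finite set of literals; a literal is a pair of a variable and a polarity
(`true` = positive, `false` = negative). `φ` satisfies the formula iff every
clause contains a literal `(x, p)` with `φ x = p`. -/
def Satisfies {V : Type} (Φ : Finset (Finset (V × Bool))) (φ : V → Bool) : Prop :=
  ∀ Cl ∈ Φ, ∃ l ∈ Cl, φ l.1 = l.2

/-- `Φ' = Φ ∧ Φ̄`: the original formula on the original variables (`Sum.inl`),
together with a copy on duplicate variables (`Sum.inr`) with all literals negated. -/
def dualFormula {n : ℕ} (Φ : Finset (Finset (Fin n × Bool))) :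
    Finset (Finset ((Fin n ⊕ Fin n) × Bool)) :=
  (Φ.image fun Cl => Cl.image fun l => ((Sum.inl l.1 : Fin n ⊕ Fin n), l.2)) ∪
    (Φ.image fun Cl => Cl.image fun l => ((Sum.inr l.1 : Fin n ⊕ Fin n), !l.2))

section Satisfaction

variable {V W : Type}

theorem satisfies_union [DecidableEq V] {Φ Ψ : Finset (Finset (V × Bool))} {φ : V → Bool} :
    Satisfies (Φ ∪ Ψ) φ ↔ Satisfies Φ φ ∧ Satisfies Ψ φ :=
  Finset.forall_mem_union

theorem satisfies_image_image [DecidableEq W] {Φ : Finset (Finset (V × Bool))}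
    {f : V × Bool → W × Bool} {φ : V → Bool} {ψ : W → Bool}
    (h : ∀ l, ψ (f l).1 = (f l).2 ↔ φ l.1 = l.2) :
    Satisfies (Φ.image fun Cl => Cl.image f) ψ ↔ Satisfies Φ φ := by
  simp only [Satisfies, Finset.forall_mem_image, Finset.exists_mem_image, h]

end Satisfaction

section Duplication

variable {V : Type}

/-- The formula `Φ' = Φ ∧ Φ̄` for an arbitrary, possibly infinite, type `V` of variables.
As in `dualFormula`, the duplicate of `Sum.inl x` is `Sum.inr x`. -/
def dualFormulaOn [DecidableEq V] (Φ : Finset (Finset (V × Bool))) :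
    Finset (Finset ((V ⊕ V) × Bool)) :=
  (Φ.image fun Cl => Cl.image fun l => (Sum.inl l.1, l.2)) ∪
    (Φ.image fun Cl => Cl.image fun l => (Sum.inr l.1, !l.2))

theorem dualFormulaOn_eq_dualFormula {n : ℕ} (Φ : Finset (Finset (Fin n × Bool))) :
    dualFormulaOn Φ = dualFormula Φ :=
  rfl

theorem satisfies_dualFormulaOn_iff [DecidableEq V] {Φ : Finset (Finset (V × Bool))}
    {ψ : V ⊕ V → Bool} :
    Satisfies (dualFormulaOn Φ) ψ ↔
      Satisfies Φ (fun x => ψ (Sum.inl x)) ∧ Satisfies Φ (fun x => !(ψ (Sum.inr x))) :=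
  satisfies_union.trans <| and_congr (satisfies_image_image fun _ => Iff.rfl)
    (satisfies_image_image fun _ => Bool.not_eq_eq_eq_not.symm)

theorem satisfies_dualFormulaOn_sumElim_not [DecidableEq V] {Φ : Finset (Finset (V × Bool))}
    {φ : V → Bool} :
    Satisfies (dualFormulaOn Φ) (Sum.elim φ fun x => !(φ x)) ↔ Satisfies Φ φ := by
  simp only [satisfies_dualFormulaOn_iff, Sum.elim_inl, Sum.elim_inr, Bool.not_not, and_self]

theorem exists_satisfies_dualFormulaOn_iff [DecidableEq V] {Φ : Finset (Finset (V × Bool))} :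
    (∃ ψ, Satisfies (dualFormulaOn Φ) ψ) ↔ ∃ φ, Satisfies Φ φ :=
  ⟨fun ⟨_, hψ⟩ => ⟨_, (satisfies_dualFormulaOn_iff.1 hψ).1⟩,
    fun ⟨_, hφ⟩ => ⟨_, satisfies_dualFormulaOn_sumElim_not.2 hφ⟩⟩

theorem mk_sumElim_not_eq_true (φ : V → Bool) :
    Cardinal.mk {v // Sum.elim φ (fun x => !(φ x)) v = true} = Cardinal.mk V :=
  Cardinal.mk_congr <| calc
    {v // Sum.elim φ (fun x => !(φ x)) v = true}
      ≃ {x // φ x = true} ⊕ {x // (!(φ x)) = true} := Equiv.subtypeSum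
    _ ≃ {x // φ x = true} ⊕ {x // ¬φ x = true} :=
        Equiv.sumCongr (Equiv.refl _)
          (Equiv.subtypeEquivRight fun _ => by rw [Bool.not_eq_true', Bool.not_eq_true])
    _ ≃ V := Equiv.sumCompl (φ · = true)

theorem stmt12_general [DecidableEq V] (Φ : Finset (Finset (V × Bool))) :
    ((∃ ψ : V ⊕ V → Bool, Satisfies (dualFormulaOn Φ) ψ) ↔ ∃ φ : V → Bool, Satisfies Φ φ) ∧
    (∀ φ : V → Bool, Satisfies Φ φ →
      Satisfies (dualFormulaOn Φ) (Sum.elim φ fun x => !(φ x)) ∧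
        Cardinal.mk {v // Sum.elim φ (fun x => !(φ x)) v = true} = Cardinal.mk V) :=
  ⟨exists_satisfies_dualFormulaOn_iff,
    fun φ hφ => ⟨satisfies_dualFormulaOn_sumElim_not.2 hφ, mk_sumElim_not_eq_true φ⟩⟩

end Duplication

theorem stmt12 (n : ℕ) (Φ : Finset (Finset (Fin n × Bool))) :
    ((∃ ψ : Fin n ⊕ Fin n → Bool, Satisfies (dualFormula Φ) ψ) ↔
      ∃ φ : Fin n → Bool, Satisfies Φ φ) ∧
    (∀ φ : Fin n → Bool, Satisfies Φ φ →
      Satisfies (dualFormula Φ) (Sum.elim φ fun x => !(φ x)) ∧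
        (Finset.univ.filter fun v : Fin n ⊕ Fin n =>
            Sum.elim φ (fun x => !(φ x)) v = true).card = n) := by
  simpa only [dualFormulaOn_eq_dualFormula, Cardinal.mk_fintype, Fintype.card_subtype,
    Fintype.card_fin, Nat.cast_inj] using stmt12_general Φ
end
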